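/- Let ω > 0, β > 0, g ∈ ℝ and t ∈ ℝ, and set n_c = 1/(βω). Then the Gaussian average of the semi-classical interferometric phase satisfies ∫∫_{ℝ²} (βω/(2π)) · exp(−(βω/2)(x₀² + p₀²)) · exp(−2√2·i·(g/ω)·(x₀·sin(ωt) + p₀·(1 − cos(ωt)))) dx₀ dp₀ = exp(−16·n_c·(g²/ω²)·sin²(ωt/2)). In particular the average is real, and its absolute value equals exp(−16·n_c·(g²/ω²)·sin²(ωt/2)), reproducing the periodic collapse and revival of the interferometric visibility with period 2π/ω. -/

import Mathlib

open Real MeasureTheory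

/-!
The phase is linear in `(x₀, p₀)`, so its thermal average is the characteristic function of a
centred isotropic Gaussian on phase space, which depends on the coefficients `(u, v)` of the phase
only through `u ^ 2 + v ^ 2`. Up to the factor `-2√2 g/ω`, these coefficients form the chord
`(sin ωt, 1 - cos ωt)` of the unit circle, which has length `2 |sin (ωt/2)|`: hence the collapses
and revivals.
-/

section IsotropicGaussian

variable {b : ℂ}

theorem integral_integral_cexp_linear_mul_cexp_neg_mul_sq_add_sq (hb : 0 < b.re) (u v : ℂ) :
    (∫ x : ℝ, ∫ y : ℝ, Complex.exp (Complex.I * (u * x + v * y)) *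
        Complex.exp (-b * ((x : ℂ) ^ 2 + (y : ℂ) ^ 2))) =
      π / b * Complex.exp (-(u ^ 2 + v ^ 2) / (4 * b)) := by
  have separate (x y : ℝ) :
      Complex.exp (Complex.I * (u * x + v * y)) *
          Complex.exp (-b * ((x : ℂ) ^ 2 + (y : ℂ) ^ 2)) =
        (Complex.exp (Complex.I * u * x) * Complex.exp (-b * (x : ℂ) ^ 2)) *
          (Complex.exp (Complex.I * v * y) * Complex.exp (-b * (y : ℂ) ^ 2)) := by
    simp only [← Complex.exp_add]
    ring_nf
  have sqrt_sq : ((π / b : ℂ) ^ (1 / 2 : ℂ)) ^ 2 = π / b := by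
    rw [one_div]
    exact Complex.cpow_ofNat_inv_pow (π / b) 2
  calc
    _ = (π / b : ℂ) ^ (1 / 2 : ℂ) * Complex.exp (-u ^ 2 / (4 * b)) *
          ((π / b : ℂ) ^ (1 / 2 : ℂ) * Complex.exp (-v ^ 2 / (4 * b))) := by
      simp_rw [separate, integral_const_mul, integral_mul_const, fourierIntegral_gaussian hb]
    _ = ((π / b : ℂ) ^ (1 / 2 : ℂ)) ^ 2 *
          Complex.exp (-u ^ 2 / (4 * b) + -v ^ 2 / (4 * b)) := by
      rw [Complex.exp_add]
      ring
    _ = π / b * Complex.exp (-(u ^ 2 + v ^ 2) / (4 * b)) := by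
      rw [sqrt_sq, neg_add, add_div]

theorem integral_integral_normalized_gaussian_mul_cexp_linear (hb : 0 < b.re) (u v : ℂ) :
    (∫ x : ℝ, ∫ y : ℝ, b / π * Complex.exp (-b * ((x : ℂ) ^ 2 + (y : ℂ) ^ 2)) *
        Complex.exp (Complex.I * (u * x + v * y))) =
      Complex.exp (-(u ^ 2 + v ^ 2) / (4 * b)) := by
  have b_ne_zero : b ≠ 0 := by
    rintro rfl
    exact hb.false
  have ofReal_pi_ne_zero : (π : ℂ) ≠ 0 := Complex.ofReal_ne_zero.mpr pi_ne_zero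
  simp_rw [mul_assoc, mul_comm (Complex.exp (-b * _)), integral_const_mul,
    integral_integral_cexp_linear_mul_cexp_neg_mul_sq_add_sq hb]
  field_simp

end IsotropicGaussian

theorem sin_sq_add_one_sub_cos_sq (θ : ℂ) :
    Complex.sin θ ^ 2 + (1 - Complex.cos θ) ^ 2 = 4 * Complex.sin (θ / 2) ^ 2 := by
  have half_angle : Complex.cos θ = 1 - 2 * Complex.sin (θ / 2) ^ 2 := by
    rw [Complex.sin_sq, Complex.cos_sq, mul_div_cancel₀ θ two_ne_zero]
    ring
  linear_combination Complex.sin_sq_add_cos_sq θ - 2 * half_angle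

theorem gaussian_thermal_average_phase_model1_general (ω β g t : ℂ) (hβω : 0 < (β * ω).re) :
    (∫ x₀ : ℝ, ∫ p₀ : ℝ,
        β * ω / (2 * π) * Complex.exp (-(β * ω / 2) * ((x₀ : ℂ) ^ 2 + (p₀ : ℂ) ^ 2)) *
          Complex.exp (Complex.I * (-(2 * (√2 : ℝ)) * (g / ω) *
            (x₀ * Complex.sin (ω * t) + p₀ * (1 - Complex.cos (ω * t)))))) =
      Complex.exp (-16 * (1 / (β * ω)) * (g ^ 2 / ω ^ 2) * Complex.sin (ω * t / 2) ^ 2) := by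
  set c : ℂ := -(2 * (√2 : ℝ)) * (g / ω)
  set u : ℂ := c * Complex.sin (ω * t) with hu
  set v : ℂ := c * (1 - Complex.cos (ω * t)) with hv
  have hb : 0 < (β * ω / 2).re := by
    simpa only [Complex.div_ofNat_re] using half_pos hβω
  have prefactor : β * ω / (2 * π) = β * ω / 2 / π := by rw [div_div]
  have phase (x p : ℂ) :
      c * (x * Complex.sin (ω * t) + p * (1 - Complex.cos (ω * t))) = u * x + v * p := by
    ring
  have c_sq : c ^ 2 = 8 * (g ^ 2 / ω ^ 2) := by
    have sqrt_two_sq : ((√2 : ℝ) : ℂ) ^ 2 = 2 := by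
      exact_mod_cast Real.sq_sqrt zero_le_two
    linear_combination 4 * (g / ω) ^ 2 * sqrt_two_sq
  have exponent : u ^ 2 + v ^ 2 = 32 * (g ^ 2 / ω ^ 2) * Complex.sin (ω * t / 2) ^ 2 := by
    rw [hu, hv, mul_pow c, mul_pow c, ← mul_add, sin_sq_add_one_sub_cos_sq, c_sq]
    ring
  simp_rw [prefactor, phase, integral_integral_normalized_gaussian_mul_cexp_linear hb, exponent]
  ring_nf

/-- Semi-classical model 1: the thermal (Boltzmann) average of the interferometric
phase factor `e^{iφ(t)}` with `φ(t) = −2√2 (g/ω)(x₀ sin ωt + p₀ (1 − cos ωt))`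
equals `exp(−16 n_c (g²/ω²) sin²(ωt/2))` with `n_c = 1/(βω)`, reproducing the
periodic collapse and revival of the interferometric visibility. -/
theorem gaussian_thermal_average_phase_model1
    (ω β g t : ℝ) (hω : 0 < ω) (hβ : 0 < β) :
    (∫ x₀ : ℝ, ∫ p₀ : ℝ,
        ((β * ω / (2 * π) * Real.exp (-(β * ω / 2) * (x₀ ^ 2 + p₀ ^ 2)) : ℝ) : ℂ) *
          Complex.exp (Complex.I *
            ((-(2 * Real.sqrt 2) * (g / ω) *
              (x₀ * Real.sin (ω * t) + p₀ * (1 - Real.cos (ω * t))) : ℝ) : ℂ)))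
      = ((Real.exp (-16 * (1 / (β * ω)) * (g ^ 2 / ω ^ 2) * Real.sin (ω * t / 2) ^ 2) : ℝ) : ℂ) := by
  have hβω : 0 < ((β : ℂ) * ω).re := by exact_mod_cast mul_pos hβ hω
  exact_mod_cast gaussian_thermal_average_phase_model1_general ω β g t hβω
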